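/- arXiv:2509.04200 — 2 statements merged into one kernel-verified Lean document; each statement's English description precedes it below -/
import Mathlib

section
/- Let X be an infinite set, κ a cardinal with 2 ≤ κ ≤ |X|, 𝒫_κ a κ-uniform partition of X, and M an inverse subsemigroup of I_X. If every orbit of M has cardinality at most κ, then M ≼ PStab(𝒫_κ). -/
open Set Cardinal

universe u

/-- A chart on `X` (an element of the symmetric inverse monoid `I_X`): a partial
bijection between subsets of `X`, encoded as a functional, injective relation,
i.e. a set of pairs. -/
structure Chart (X : Type u) : Type u where
  rel : Set (X × X)
  functional : ∀ ⦃x y y'⦄, (x, y) ∈ rel → (x, y') ∈ rel → y = y'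
  injective : ∀ ⦃x x' y⦄, (x, y) ∈ rel → (x', y) ∈ rel → x = x'

namespace Chart

variable {X : Type u}

/-- Composition of charts: compose wherever possible. -/
instance : Mul (Chart X) :=
  ⟨fun f g =>
    { rel := {p | ∃ y, (p.1, y) ∈ f.rel ∧ (y, p.2) ∈ g.rel}
      functional := by
        rintro x y y' ⟨z, hz1, hz2⟩ ⟨w, hw1, hw2⟩
        obtain rfl : z = w := f.functional hz1 hw1
        exact g.functional hz2 hw2
      injective := by
        rintro x x' y ⟨z, hz1, hz2⟩ ⟨w, hw1, hw2⟩
        obtain rfl : z = w := g.injective hz2 hw2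
        exact f.injective hz1 hw1 }⟩

/-- The inverse chart. -/
instance : Inv (Chart X) :=
  ⟨fun f =>
    { rel := {p | (p.2, p.1) ∈ f.rel}
      functional := fun _ _ _ h h' => f.injective h h'
      injective := fun _ _ _ h h' => f.functional h h' }⟩

/-- The domain of a chart. -/
def dom (f : Chart X) : Set X := {x | ∃ y, (x, y) ∈ f.rel}

/-- The range (image) of a chart. -/
def ran (f : Chart X) : Set X := {y | ∃ x, (x, y) ∈ f.rel}

end Chart

/-- Membership in the subsemigroup of `I_X` generated by a set of charts. -/
inductive InGen {X : Type u} (S : Set (Chart X)) : Chart X → Prop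
  | base {f : Chart X} : f ∈ S → InGen S f
  | mul {f g : Chart X} : InGen S f → InGen S g → InGen S (f * g)

/-- The subsemigroup of `I_X` generated by a set of charts. -/
def Sgen {X : Type u} (S : Set (Chart X)) : Set (Chart X) := {f | InGen S f}

/-- The Bergman–Shelah preorder `S ≼ T` on subsets of `I_X`: there is a countable
subset `U ⊆ I_X` with `S` contained in the subsemigroup generated by `T ∪ U`. -/
def BSleq {X : Type u} (S T : Set (Chart X)) : Prop :=
  ∃ U : Set (Chart X), U.Countable ∧ S ⊆ Sgen (T ∪ U)

/-- Bergman–Shelah equivalence `S ≈ T`. -/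
def BSequiv {X : Type u} (S T : Set (Chart X)) : Prop := BSleq S T ∧ BSleq T S

/-- The Bergman–Shelah preorder relative to a cardinal `κ`: `S ≼_κ T` iff there is
`U ⊆ I_X` with `|U| < κ` and `S` contained in the subsemigroup generated by `T ∪ U`. -/
def BSleqC {X : Type u} (κ : Cardinal.{u}) (S T : Set (Chart X)) : Prop :=
  ∃ U : Set (Chart X), #↥U < κ ∧ S ⊆ Sgen (T ∪ U)

/-- Bergman–Shelah equivalence relative to a cardinal `κ`. -/
def BSequivC {X : Type u} (κ : Cardinal.{u}) (S T : Set (Chart X)) : Prop :=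
  BSleqC κ S T ∧ BSleqC κ T S

/-- A chart is a permutation of `X` if it is everywhere defined and surjective. -/
def IsPermChart {X : Type u} (f : Chart X) : Prop :=
  (∀ x : X, ∃ y, (x, y) ∈ f.rel) ∧ ∀ y : X, ∃ x, (x, y) ∈ f.rel

/-- The partwise stabiliser of a family of subsets of `X`: all permutations of `X`
mapping each member of the family onto itself. -/
def PStab {X : Type u} (P : Set (Set X)) : Set (Chart X) :=
  {f | IsPermChart f ∧ ∀ B ∈ P, {y | ∃ x ∈ B, (x, y) ∈ f.rel} = B}

/-- A subset of `I_X` closed under composition. -/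
def IsSubsemigroup {X : Type u} (S : Set (Chart X)) : Prop :=
  ∀ f ∈ S, ∀ g ∈ S, f * g ∈ S

/-- A subsemigroup of `I_X` closed under inversion. -/
def IsInverseSubsemigroup {X : Type u} (S : Set (Chart X)) : Prop :=
  IsSubsemigroup S ∧ ∀ f ∈ S, f⁻¹ ∈ S

/-- The orbit of a point under a set of charts: `{x} ∪ {xf : f ∈ M, x ∈ dom f}`. -/
def ChartOrbit {X : Type u} (M : Set (Chart X)) (x : X) : Set X :=
  insert x {y | ∃ f ∈ M, (x, y) ∈ f.rel}

/-- The cone of a point under a set of charts: `{xs : s ∈ S, x ∈ dom s}`. -/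
def ChartCone {X : Type u} (S : Set (Chart X)) (x : X) : Set X :=
  {y | ∃ f ∈ S, (x, y) ∈ f.rel}

/-- The semilattice of idempotents of `I_X`: the partial identity charts. -/
def EX (X : Type u) : Set (Chart X) := {f | ∀ x y : X, (x, y) ∈ f.rel → y = x}

/-- A `κ`-uniform partition: every part has cardinality `κ`. -/
def IsUniformPartition {X : Type u} (κ : Cardinal.{u}) (P : Set (Set X)) : Prop :=
  Setoid.IsPartition P ∧ ∀ B ∈ P, #↥B = κ

/-- A `κ`-unbounded partition: all parts have cardinality `< κ` but no cardinal
`c < κ` bounds the cardinalities of all parts. -/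
def IsUnboundedPartition {X : Type u} (κ : Cardinal.{u}) (P : Set (Set X)) : Prop :=
  Setoid.IsPartition P ∧ (∀ B ∈ P, #↥B < κ) ∧ ¬∃ c < κ, ∀ B ∈ P, #↥B ≤ c

/-- A `κ`-bounded partition: some cardinal `c < κ` bounds the cardinalities of
all parts. -/
def IsBoundedPartition {X : Type u} (κ : Cardinal.{u}) (P : Set (Set X)) : Prop :=
  Setoid.IsPartition P ∧ ∃ c < κ, ∀ B ∈ P, #↥B ≤ c

/-- A rooted tree on (a subset of) `X`, encoded via its parent function: every
vertex reaches the root by finitely many applications of `par`. -/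
structure RTree (X : Type u) : Type u where
  verts : Set X
  root : X
  root_mem : root ∈ verts
  par : X → X
  par_mem : ∀ x ∈ verts, par x ∈ verts
  par_root : par root = root
  par_reaches : ∀ x ∈ verts, ∃ n : ℕ, par^[n] x = root

namespace RTree

variable {X : Type u}

/-- `T.anc x y` : `x` is an ancestor of `y` (or `x = y`), i.e. `x` lies on the
rooted path to `y`. -/
def anc (T : RTree X) (x y : X) : Prop := ∃ n : ℕ, T.par^[n] y = x

/-- The level of a vertex: its distance to the root. -/
noncomputable def level (T : RTree X) (x : X) : ℕ := sInf {n : ℕ | T.par^[n] x = T.root}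

/-- The children of a vertex. -/
def children (T : RTree X) (x : X) : Set X :=
  {y | y ∈ T.verts ∧ T.par y = x ∧ y ≠ x}

/-- The neighbours of a vertex in the tree (its children together with its
parent, if the vertex is not the root); the degree of the vertex is the size
of this set. -/
def nbhd (T : RTree X) (x : X) : Set X :=
  {y | y ∈ T.verts ∧ ((T.par y = x ∧ y ≠ x) ∨ (T.par x = y ∧ x ≠ y))}

/-- `P` is the vertex set of a (finite or infinite) path of `T` starting at the
root: a nonempty set of vertices closed under taking parents and linearly
ordered by ancestry. -/
def IsRootedPath (T : RTree X) (P : Set X) : Prop :=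
  P.Nonempty ∧ P ⊆ T.verts ∧ (∀ x ∈ P, T.par x ∈ P) ∧
    ∀ x ∈ P, ∀ y ∈ P, T.anc x y ∨ T.anc y x

end RTree

/-- `T'` is a subtree of `T`: a rooted tree on a subset of the vertices of `T`,
with the same root and the same parent relation. -/
def IsSubtree {X : Type u} (T' T : RTree X) : Prop :=
  T'.verts ⊆ T.verts ∧ T'.root = T.root ∧ ∀ x ∈ T'.verts, T'.par x = T.par x

/-- `Q` is a quasi-subtree of `T`: a rooted tree on a subset of the vertices of
`T` preserving the ancestry relation and the levels of `T`. -/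
def IsQuasiSubtree {X : Type u} (Q T : RTree X) : Prop :=
  Q.verts ⊆ T.verts ∧
    (∀ x ∈ Q.verts, ∀ y ∈ Q.verts, (Q.anc x y ↔ T.anc x y)) ∧
    ∀ x ∈ Q.verts, ∀ y ∈ Q.verts, (Q.level x = Q.level y ↔ T.level x = T.level y)

/-- Isomorphism of rooted trees: a bijection of the vertex sets mapping root to
root and commuting with the parent functions. -/
def RTreeIso {X : Type u} {Y : Type u} (T : RTree X) (R : RTree Y) : Prop :=
  ∃ φ : X → Y, Set.BijOn φ T.verts R.verts ∧ φ T.root = R.root ∧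
    ∀ x ∈ T.verts, φ (T.par x) = R.par (φ x)

/-- The semigroup `𝒮(T)` of path-bijections of a rooted tree `T`: charts whose
domain and range are vertex sets of rooted paths and which preserve levels. -/
def pathSg {X : Type u} (T : RTree X) : Set (Chart X) :=
  {f | (∃ P, T.IsRootedPath P ∧ Chart.dom f = P) ∧
    (∃ Q, T.IsRootedPath Q ∧ Chart.ran f = Q) ∧
    ∀ x y : X, (x, y) ∈ f.rel → T.level y = T.level x}

/-!
Let `p` be the projection of `X` onto the parts of the partition and `q` the projection onto the
`M`-orbits, so that every chart in `M` preserves the fibres of `q`. If a permutation `σ` of a set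
`Y` becomes `p`-preserving once `Y` is embedded into `X`, then every chart cut out of `σ` by two
embeddings `X ↪ Y` is a product `a * g * b⁻¹`, where `g ∈ PStab P` and the charts `a`, `b` do not
depend on `σ`. An arbitrary chart `f` is cut out in this way of an involution of two disjoint copies
of `X`, namely the one exchanging `x` in the first copy with `xf` in the second.

For infinite `κ` the two copies fit into `X`: since `κ + κ = κ`, either the parts are numerous
enough to receive two copies of each orbit in a part of its own, or `κ = |X|` and a single part
receives everything. For finite `κ` there is room for two copies of a point but not for two copies
of an orbit; there, however, each chart preserving the orbits is a partial identity followed by a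
permutation preserving the orbits, and one copy of each orbit is enough for the latter.
-/

open Function

universe v w

section Fibers

theorem exists_embedding_of_mk_fiber_le {X Y : Type u} {Q : Type v} {I : Type w} {q : Y → Q}
    {p : X → I} (i : Q ↪ I) (h : ∀ a, #(q ⁻¹' {a}) ≤ #(p ⁻¹' {i a})) :
    ∃ φ : Y ↪ X, ∀ y, p (φ y) = i (q y) := by
  have e (a : Q) : {y // q y = a} ↪ {x // p x = i a} := ((Cardinal.le_def _ _).1 (h a)).some
  exact ⟨((Equiv.sigmaFiberEquiv q).symm.toEmbedding.trans (i.sigmaMap e)).trans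
    (Equiv.sigmaFiberEquiv p).toEmbedding, fun y ↦ (e (q y) ⟨y, rfl⟩).2⟩

theorem mk_sumElim_fiber {X : Type u} {Q : Type v} (q : X → Q) (a : Q) :
    #(Sum.elim q q ⁻¹' {a}) = #(q ⁻¹' {a}) + #(q ⁻¹' {a}) :=
  (mk_congr Equiv.subtypeSum).trans (add_def _ _).symm

theorem mk_le_or_mk_le_of_mk_fiber_le {X I : Type u} [Infinite X] {κ : Cardinal.{u}} {p : X → I}
    (hp : ∀ b, #(p ⁻¹' {b}) ≤ κ) : #X ≤ #I ∨ #X ≤ κ := by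
  by_contra! h
  exact (mk_le_mk_mul_of_mk_preimage_le p hp).not_gt (mul_lt_of_lt (aleph0_le_mk X) h.1 h.2)

theorem exists_perm_eqOn_of_finite_fibers {X : Type u} {Q : Type v} {q : X → Q}
    (hq : ∀ a, Finite (q ⁻¹' {a})) {s : Set X} {F : X → X} (hF : InjOn F s)
    (hqF : ∀ x ∈ s, q (F x) = q x) :
    ∃ σ : Equiv.Perm X, (∀ x, q (σ x) = q x) ∧ EqOn σ F s := by
  have exists_fiber_perm (a : Q) :
      ∃ τ : Equiv.Perm (q ⁻¹' {a}), ∀ x, x.1 ∈ s → (τ x : X) = F x := by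
    have := hq a
    obtain ⟨τ, hτ⟩ := Equiv.Perm.exists_extending_pair
      (fun x : {x : q ⁻¹' {a} // x.1 ∈ s} ↦ x.1)
      (fun x ↦ ⟨F x.1, (hqF _ x.2).trans x.1.2⟩) Subtype.val_injective
      fun x y h ↦ Subtype.ext (Subtype.ext (hF x.2 y.2 (congrArg Subtype.val h)))
    exact ⟨τ, fun x hx ↦ congrArg Subtype.val (hτ ⟨x, hx⟩)⟩
  choose τ hτ using exists_fiber_perm
  exact ⟨Equiv.ofFiberEquiv τ, Equiv.ofFiberEquiv_map τ, fun x hx ↦ hτ (q x) ⟨x, rfl⟩ hx⟩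

end Fibers

section GeneratedSubsemigroup

variable {X : Type u} {S T R : Set (Chart X)}

theorem subset_sgen : S ⊆ Sgen S := fun _ ↦ InGen.base

theorem sgen_subset (h : S ⊆ Sgen T) : Sgen S ⊆ Sgen T := by
  intro f hf
  induction hf with
  | base hf => exact h hf
  | mul _ _ hf hg => exact .mul hf hg

theorem sgen_mono (h : S ⊆ T) : Sgen S ⊆ Sgen T := sgen_subset (h.trans subset_sgen)

namespace BSleq

theorem of_subset_sgen (h : S ⊆ Sgen T) : BSleq S T :=
  ⟨∅, countable_empty, by rwa [union_empty]⟩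

theorem of_subset (h : S ⊆ T) : BSleq S T := of_subset_sgen (h.trans subset_sgen)

theorem trans (hST : BSleq S T) (hTR : BSleq T R) : BSleq S R := by
  obtain ⟨U, hU, hSU⟩ := hST
  obtain ⟨V, hV, hTV⟩ := hTR
  refine ⟨V ∪ U, hV.union hU, hSU.trans (sgen_subset (union_subset ?_ ?_))⟩
  · exact hTV.trans (sgen_mono (union_subset_union_right R subset_union_left))
  · exact (subset_union_right.trans subset_union_right).trans subset_sgen

theorem union (hS : BSleq S R) (hT : BSleq T R) : BSleq (S ∪ T) R := by
  obtain ⟨U, hU, hSU⟩ := hS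
  obtain ⟨V, hV, hTV⟩ := hT
  refine ⟨U ∪ V, hU.union hV, union_subset ?_ ?_⟩
  · exact hSU.trans (sgen_mono (union_subset_union_right R subset_union_left))
  · exact hTV.trans (sgen_mono (union_subset_union_right R subset_union_right))

end BSleq

end GeneratedSubsemigroup

namespace Chart

variable {X Y : Type u} {f g : Chart X} {x y : X}

@[ext]
theorem ext (h : ∀ x y, (x, y) ∈ f.rel ↔ (x, y) ∈ g.rel) : f = g := by
  cases f
  cases g
  congr 1
  exact Set.ext fun p ↦ h p.1 p.2

theorem mem_mul : (x, y) ∈ (f * g).rel ↔ ∃ z, (x, z) ∈ f.rel ∧ (z, y) ∈ g.rel := Iff.rfl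

theorem mem_inv : (x, y) ∈ f⁻¹.rel ↔ (y, x) ∈ f.rel := Iff.rfl

open Classical in
/-- The map underlying a chart, extended by the identity outside the domain. -/
noncomputable def extend (f : Chart X) (x : X) : X := if h : x ∈ f.dom then h.choose else x

theorem extend_eq (h : (x, y) ∈ f.rel) : f.extend x = y := by
  have hx : x ∈ f.dom := ⟨y, h⟩
  simpa only [extend, dif_pos hx] using f.functional hx.choose_spec h

theorem injOn_extend_dom (f : Chart X) : InjOn f.extend f.dom := by
  rintro x ⟨y, hxy⟩ x' ⟨y', hxy'⟩ h
  rw [extend_eq hxy, extend_eq hxy'] at h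
  exact f.injective hxy (h ▸ hxy')

/-- An injection of `X` into itself, regarded as a chart. -/
def ofEmbedding (i : X ↪ X) : Chart X where
  rel := {p | i p.1 = p.2}
  functional _ _ _ h h' := h.symm.trans h'
  injective _ _ _ h h' := i.injective (Eq.trans h (Eq.symm h'))

theorem mem_ofEmbedding {i : X ↪ X} : (x, y) ∈ (ofEmbedding i).rel ↔ i x = y := Iff.rfl

theorem eq_ofEmbedding_mul_viaEmbedding_mul_inv (φ : Y ↪ X) {j k : X ↪ Y} {σ : Equiv.Perm Y}
    (hf : ∀ x y, (x, y) ∈ f.rel ↔ σ (j x) = k y) :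
    f = ofEmbedding (j.trans φ) * ofEmbedding (σ.viaEmbedding φ).toEmbedding *
      (ofEmbedding (k.trans φ))⁻¹ := by
  ext x y
  simp only [mem_mul, mem_inv, mem_ofEmbedding, hf, Embedding.trans_apply, exists_eq_left',
    Equiv.coe_toEmbedding, Equiv.Perm.viaEmbedding_apply, φ.injective.eq_iff]
  exact eq_comm

theorem mul_inv_self_mem_EX (f : Chart X) : f * f⁻¹ ∈ EX X :=
  fun _ _ ⟨_, hxz, hyz⟩ ↦ f.injective hyz hxz

theorem eq_mul_inv_self_mul_ofEmbedding {i : X ↪ X} (h : EqOn i f.extend f.dom) :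
    f = f * f⁻¹ * ofEmbedding i := by
  have apply_eq {x y} (hxy : (x, y) ∈ f.rel) : i x = y := (h ⟨y, hxy⟩).trans (extend_eq hxy)
  ext x y
  constructor
  · exact fun hxy ↦ ⟨x, ⟨y, hxy, hxy⟩, apply_eq hxy⟩
  · rintro ⟨x', ⟨z, hxz, hxz'⟩, hix'⟩
    obtain rfl : x = x' := f.injective hxz hxz'
    obtain rfl : z = y := (apply_eq hxz).symm.trans hix'
    exact hxz

open Classical in
/-- The involution of two disjoint copies of `X` that exchanges each `x ∈ dom f` in the first copy
with its image `xf` in the second, and fixes all other points. -/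
noncomputable def swapMap (f : Chart X) : X ⊕ X → X ⊕ X
  | .inl x => if x ∈ f.dom then .inr (f.extend x) else .inl x
  | .inr y => if y ∈ f.ran then .inl (f⁻¹.extend y) else .inr y

theorem swapMap_inl_of_mem (h : (x, y) ∈ f.rel) : f.swapMap (.inl x) = .inr y :=
  (if_pos ⟨y, h⟩).trans (congrArg _ (extend_eq h))

theorem swapMap_inr_of_mem (h : (x, y) ∈ f.rel) : f.swapMap (.inr y) = .inl x :=
  (if_pos ⟨x, h⟩).trans (congrArg _ (extend_eq (mem_inv.2 h)))

theorem swapMap_inl_of_notMem (h : x ∉ f.dom) : f.swapMap (.inl x) = .inl x := if_neg h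

theorem swapMap_inr_of_notMem (h : y ∉ f.ran) : f.swapMap (.inr y) = .inr y := if_neg h

theorem swapMap_involutive (f : Chart X) : Involutive f.swapMap := by
  rintro (x | y)
  · by_cases hx : x ∈ f.dom
    · obtain ⟨y, hxy⟩ := hx
      rw [swapMap_inl_of_mem hxy, swapMap_inr_of_mem hxy]
    · rw [swapMap_inl_of_notMem hx, swapMap_inl_of_notMem hx]
  · by_cases hy : y ∈ f.ran
    · obtain ⟨x, hxy⟩ := hy
      rw [swapMap_inr_of_mem hxy, swapMap_inl_of_mem hxy]
    · rw [swapMap_inr_of_notMem hy, swapMap_inr_of_notMem hy]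

theorem mem_rel_iff_swapMap_inl_eq_inr : (x, y) ∈ f.rel ↔ f.swapMap (.inl x) = .inr y := by
  refine ⟨swapMap_inl_of_mem, fun h ↦ ?_⟩
  by_cases hx : x ∈ f.dom
  · obtain ⟨z, hxz⟩ := hx
    rw [swapMap_inl_of_mem hxz] at h
    rwa [← Sum.inr_injective h]
  · rw [swapMap_inl_of_notMem hx] at h
    exact absurd h Sum.inl_ne_inr

end Chart

open Chart

section FiberPreserving

variable {X : Type u} {Q : Type v} {I : Type w}

/-- The charts `f` that preserve the fibres of `q`, in the sense that `q (xf) = q x` for all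
`x ∈ dom f`. -/
def fiberCharts (q : X → Q) : Set (Chart X) := {f | ∀ x y, (x, y) ∈ f.rel → q x = q y}

/-- The permutations of `X`, regarded as charts, that map every fibre of `p` onto itself: the
partwise stabiliser of the partition of `X` into the fibres of `p`. -/
def fiberPerms (p : X → I) : Set (Chart X) :=
  {f | ∃ σ : Equiv.Perm X, (∀ x, p (σ x) = p x) ∧ f = ofEmbedding σ.toEmbedding}

theorem EX_subset_fiberCharts_id : EX X ⊆ fiberCharts id := fun _ hf x y hxy ↦ (hf x y hxy).symm

theorem sumElim_swapMap {q : X → Q} {f : Chart X} (hf : f ∈ fiberCharts q) (z : X ⊕ X) :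
    Sum.elim q q (f.swapMap z) = Sum.elim q q z := by
  rcases z with x | y
  · by_cases hx : x ∈ f.dom
    · obtain ⟨y, hxy⟩ := hx
      rw [swapMap_inl_of_mem hxy]
      exact (hf x y hxy).symm
    · rw [swapMap_inl_of_notMem hx]
  · by_cases hy : y ∈ f.ran
    · obtain ⟨x, hxy⟩ := hy
      rw [swapMap_inr_of_mem hxy]
      exact hf x y hxy
    · rw [swapMap_inr_of_notMem hy]

theorem ofEmbedding_viaEmbedding_mem_fiberPerms {Y : Type u} {p : X → I} {φ : Y ↪ X}
    {σ : Equiv.Perm Y} (h : ∀ y, p (φ (σ y)) = p (φ y)) :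
    ofEmbedding (σ.viaEmbedding φ).toEmbedding ∈ fiberPerms p := by
  refine ⟨_, fun x ↦ ?_, rfl⟩
  by_cases hx : x ∈ range φ
  · obtain ⟨y, rfl⟩ := hx
    rw [Equiv.Perm.viaEmbedding_apply, h]
  · rw [Equiv.Perm.viaEmbedding_apply_of_notMem σ φ x hx]

theorem bsleq_fiberPerms_of_forall_exists_perm {Y : Type u} {S : Set (Chart X)} {p : X → I}
    (φ : Y ↪ X) (j k : X ↪ Y)
    (h : ∀ f ∈ S, ∃ σ : Equiv.Perm Y, (∀ y, p (φ (σ y)) = p (φ y)) ∧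
      ∀ x y, (x, y) ∈ f.rel ↔ σ (j x) = k y) :
    BSleq S (fiberPerms p) := by
  refine ⟨{ofEmbedding (j.trans φ), (ofEmbedding (k.trans φ))⁻¹}, (toFinite _).countable, ?_⟩
  intro f hf
  obtain ⟨σ, hσ, hfσ⟩ := h f hf
  rw [eq_ofEmbedding_mul_viaEmbedding_mul_inv φ hfσ]
  have hg := ofEmbedding_viaEmbedding_mem_fiberPerms hσ
  exact .mul (.mul (.base (.inr (.inl rfl))) (.base (.inl hg))) (.base (.inr (.inr rfl)))

theorem fiberPerms_bsleq_fiberPerms {q : X → Q} {p : X → I} (i : Q ↪ I)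
    (h : ∀ a, #(q ⁻¹' {a}) ≤ #(p ⁻¹' {i a})) : BSleq (fiberPerms q) (fiberPerms p) := by
  obtain ⟨φ, hφ⟩ := exists_embedding_of_mk_fiber_le i h
  refine bsleq_fiberPerms_of_forall_exists_perm φ (.refl X) (.refl X) ?_
  rintro _ ⟨σ, hσ, rfl⟩
  exact ⟨σ, fun y ↦ by rw [hφ, hφ, hσ], fun x y ↦ Iff.rfl⟩

theorem fiberCharts_bsleq_fiberPerms_of_add_le {q : X → Q} {p : X → I} (i : Q ↪ I)
    (h : ∀ a, #(q ⁻¹' {a}) + #(q ⁻¹' {a}) ≤ #(p ⁻¹' {i a})) :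
    BSleq (fiberCharts q) (fiberPerms p) := by
  obtain ⟨φ, hφ⟩ := exists_embedding_of_mk_fiber_le (q := Sum.elim q q) i
    fun a ↦ (mk_sumElim_fiber q a).trans_le (h a)
  refine bsleq_fiberPerms_of_forall_exists_perm φ .inl .inr fun f hf ↦
    ⟨f.swapMap_involutive.toPerm, fun z ↦ ?_, fun x y ↦ mem_rel_iff_swapMap_inl_eq_inr⟩
  rw [hφ, hφ]
  exact congrArg i (sumElim_swapMap hf z)

theorem fiberCharts_subset_sgen_of_finite_fibers {q : X → Q} (hq : ∀ a, Finite (q ⁻¹' {a})) :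
    fiberCharts q ⊆ Sgen (EX X ∪ fiberPerms q) := by
  intro f hf
  obtain ⟨σ, hqσ, hσ⟩ := exists_perm_eqOn_of_finite_fibers hq f.injOn_extend_dom
    fun x ⟨y, hxy⟩ ↦ by rw [extend_eq hxy, hf x y hxy]
  rw [eq_mul_inv_self_mul_ofEmbedding (i := σ.toEmbedding) hσ]
  exact .mul (.base (.inl f.mul_inv_self_mem_EX)) (.base (.inr ⟨σ, hqσ, rfl⟩))

end FiberPreserving

section Uniform

variable {X Q I : Type u} [Infinite X] {κ : Cardinal.{u}} {p : X → I} {q : X → Q}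

theorem fiberCharts_bsleq_fiberPerms_of_aleph0_le (hκ : ℵ₀ ≤ κ) (hp : ∀ b, #(p ⁻¹' {b}) = κ)
    (hqs : Surjective q) (hq : ∀ a, #(q ⁻¹' {a}) ≤ κ) :
    BSleq (fiberCharts q) (fiberPerms p) := by
  rcases mk_le_or_mk_le_of_mk_fiber_le fun b ↦ (hp b).le with hXI | hXκ
  · obtain ⟨i⟩ : Nonempty (Q ↪ I) := (mk_le_of_surjective hqs).trans hXI
    refine fiberCharts_bsleq_fiberPerms_of_add_le i fun a ↦ ?_
    rw [hp, ← add_eq_self hκ]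
    exact add_le_add (hq a) (hq a)
  · -- All of `X ⊕ X` fits into a single fibre of `p`.
    obtain ⟨x⟩ : Nonempty X := inferInstance
    have hconst : BSleq (fiberCharts fun _ : X ↦ ()) (fiberPerms p) := by
      refine fiberCharts_bsleq_fiberPerms_of_add_le ⟨fun _ ↦ p x, injective_of_subsingleton _⟩
        fun a ↦ ?_
      rw [hp, ← add_eq_self hκ]
      exact add_le_add ((mk_set_le _).trans hXκ) ((mk_set_le _).trans hXκ)
    exact (BSleq.of_subset fun _ _ ↦ fun _ _ _ ↦ rfl).trans hconst

theorem fiberCharts_bsleq_fiberPerms_of_lt_aleph0 (hκ₂ : 2 ≤ κ) (hκ : κ < ℵ₀)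
    (hp : ∀ b, #(p ⁻¹' {b}) = κ) (hqs : Surjective q) (hq : ∀ a, #(q ⁻¹' {a}) ≤ κ) :
    BSleq (fiberCharts q) (fiberPerms p) := by
  have hXI : #X ≤ #I := (mk_le_or_mk_le_of_mk_fiber_le fun b ↦ (hp b).le).resolve_right
    (hκ.trans_le (aleph0_le_mk X)).not_ge
  have hfactor : BSleq (fiberCharts q) (EX X ∪ fiberPerms q) :=
    .of_subset_sgen (fiberCharts_subset_sgen_of_finite_fibers
      fun a ↦ lt_aleph0_iff_finite.1 ((hq a).trans_lt hκ))
  have hEX : BSleq (EX X) (fiberPerms p) := by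
    obtain ⟨i⟩ : Nonempty (X ↪ I) := hXI
    refine (BSleq.of_subset EX_subset_fiberCharts_id).trans
      (fiberCharts_bsleq_fiberPerms_of_add_le i fun a ↦ ?_)
    rw [preimage_id, mk_singleton, one_add_one_eq_two, hp]
    exact hκ₂
  have hperms : BSleq (fiberPerms q) (fiberPerms p) := by
    obtain ⟨i⟩ : Nonempty (Q ↪ I) := (mk_le_of_surjective hqs).trans hXI
    exact fiberPerms_bsleq_fiberPerms i fun a ↦ (hq a).trans_eq (hp (i a)).symm
  exact hfactor.trans (hEX.union hperms)

theorem fiberCharts_bsleq_fiberPerms (hκ₂ : 2 ≤ κ) (hp : ∀ b, #(p ⁻¹' {b}) = κ)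
    (hqs : Surjective q) (hq : ∀ a, #(q ⁻¹' {a}) ≤ κ) :
    BSleq (fiberCharts q) (fiberPerms p) :=
  (lt_or_ge κ ℵ₀).elim
    (fun hκ ↦ fiberCharts_bsleq_fiberPerms_of_lt_aleph0 hκ₂ hκ hp hqs hq)
    (fun hκ ↦ fiberCharts_bsleq_fiberPerms_of_aleph0_le hκ hp hqs hq)

end Uniform

section Quotients

variable {X : Type u}

theorem preimage_quotientMk_mk (r : Setoid X) (x : X) :
    Quotient.mk r ⁻¹' {Quotient.mk r x} = {y | r y x} :=
  Set.ext fun _ ↦ Quotient.eq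

theorem mk_quotientMk_fiber_of_classes {κ : Cardinal.{u}} {r : Setoid X}
    (hr : ∀ B ∈ r.classes, #B = κ) (a : Quotient r) : #(Quotient.mk r ⁻¹' {a}) = κ := by
  obtain ⟨x, rfl⟩ := Quotient.exists_rep a
  rw [preimage_quotientMk_mk]
  exact hr _ (r.mem_classes x)

theorem fiberPerms_quotientMk_subset_PStab (r : Setoid X) :
    fiberPerms (Quotient.mk r) ⊆ PStab r.classes := by
  rintro _ ⟨σ, hσ, rfl⟩
  refine ⟨⟨fun x ↦ ⟨σ x, rfl⟩, fun y ↦ ⟨σ.symm y, σ.apply_symm_apply y⟩⟩, ?_⟩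
  rintro _ ⟨z, rfl⟩
  have rel_iff (x : X) : r (σ x) z ↔ r x z := by
    rw [← Quotient.eq, hσ, Quotient.eq]
  change σ '' {x | r x z} = {x | r x z}
  rw [Equiv.image_eq_preimage_symm]
  ext y
  rw [mem_preimage, mem_ofPred_eq, ← rel_iff, σ.apply_symm_apply, mem_ofPred_eq]

/-- The equivalence relation on `X` whose classes are the orbits of an inverse subsemigroup `M`
of `I_X`. -/
def orbitSetoid {M : Set (Chart X)} (hM : IsInverseSubsemigroup M) : Setoid X where
  r x y := x ∈ ChartOrbit M y
  iseqv.refl x := .inl rfl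
  iseqv.symm := by
    rintro x y (rfl | ⟨f, hf, hyx⟩)
    · exact .inl rfl
    · exact .inr ⟨f⁻¹, hM.2 f hf, hyx⟩
  iseqv.trans := by
    rintro x y z (rfl | ⟨f, hf, hyx⟩) (rfl | ⟨g, hg, hzy⟩)
    · exact .inl rfl
    · exact .inr ⟨g, hg, hzy⟩
    · exact .inr ⟨f, hf, hyx⟩
    · exact .inr ⟨g * f, hM.1 g hg f hf, y, hzy, hyx⟩

variable {M : Set (Chart X)} (hM : IsInverseSubsemigroup M)

theorem subset_fiberCharts_orbitSetoid : M ⊆ fiberCharts (Quotient.mk (orbitSetoid hM)) :=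
  fun f hf _ _ hxy ↦ (Quotient.sound (s := orbitSetoid hM) (.inr ⟨f, hf, hxy⟩)).symm

theorem mk_orbitSetoid_fiber_le {κ : Cardinal.{u}} (horb : ∀ x, #(ChartOrbit M x) ≤ κ)
    (a : Quotient (orbitSetoid hM)) : #(Quotient.mk (orbitSetoid hM) ⁻¹' {a}) ≤ κ := by
  obtain ⟨x, rfl⟩ := Quotient.exists_rep a
  rw [preimage_quotientMk_mk]
  exact horb x

end Quotients

/-- If `2 ≤ κ ≤ |X|`, `P` is a κ-uniform partition of the infinite
set `X`, and `M` is an inverse subsemigroup of `I_X` all of whose orbits have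
cardinality at most `κ`, then `M ≼ PStab P`. -/
theorem stmt1 {X : Type u} [Infinite X] (κ : Cardinal.{u}) (hκ2 : 2 ≤ κ)
    (hκX : κ ≤ #X) (P : Set (Set X)) (hP : IsUniformPartition κ P)
    (M : Set (Chart X)) (hM : IsInverseSubsemigroup M)
    (horb : ∀ x : X, #↥(ChartOrbit M x) ≤ κ) :
    BSleq M (PStab P) := by
  obtain ⟨r, rfl⟩ : ∃ r : Setoid X, r.classes = P := ⟨_, Setoid.classes_mkClasses P hP.1⟩
  have hM_le : BSleq M (fiberCharts (Quotient.mk (orbitSetoid hM))) :=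
    .of_subset (subset_fiberCharts_orbitSetoid hM)
  have horbits_le : BSleq (fiberCharts (Quotient.mk (orbitSetoid hM)))
      (fiberPerms (Quotient.mk r)) :=
    fiberCharts_bsleq_fiberPerms hκ2 (mk_quotientMk_fiber_of_classes hP.2) Quotient.mk_surjective
      (mk_orbitSetoid_fiber_le hM horb)
  have hperms_le : BSleq (fiberPerms (Quotient.mk r)) (PStab r.classes) :=
    .of_subset (fiberPerms_quotientMk_subset_PStab r)
  exact (hM_le.trans horbits_le).trans hperms_le
end

section
/- Let X be a countably infinite set and S a subsemigroup of I_X. Suppose there exist two disjoint sequences of distinct elements (α_i)_{i∈ω}, (β_i)_{i∈ω} ∈ X^ω such that for every sequence (γ_i)_{i∈ω} with γ_i ∈ {α_i, β_i} for each i, there exist g, g′ ∈ S such that α_i g = γ_i for all i and γ_i g′ = α_i for all i. Then PStab(𝒫_2) ≼ S. -/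
/-!
Replacing `α` and `β` by `α ∘ e` and `β ∘ e` for an embedding `e : X ↪ ι` of `X` into their
index type, we may assume that the two sequences are indexed by `X` itself. Let `σ` be the chart
exchanging the two points of each two-element part, `u` the chart `x ↦ α x`, and `v` the chart
fixing every `α x` and sending `β x` to `β (x σ)`. Given `f` in the partwise stabiliser, put
`γ x = α x` if `f` fixes `x` and `γ x = β x` otherwise, and choose `g, g' ∈ S` for `γ`. As `f` maps
the set of points that it moves to itself, `v` sends `γ x` to `γ (x f)`, so `f = u g v g' u⁻¹`,
where only `g` and `g'` depend on `f`.
-/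

open Set Cardinal

universe u

theorem eq_of_encard_le_two {X : Type*} {B : Set X} (hB : B.encard ≤ 2) {x y z : X} (hx : x ∈ B)
    (hy : y ∈ B) (hz : z ∈ B) (hyx : y ≠ x) (hzx : z ≠ x) : y = z := by
  have hdiff : (B \ {x}).encard ≤ 1 := by
    rw [← Set.encard_sdiff_singleton_add_one hx, ← one_add_one_eq_two] at hB
    exact (ENat.add_le_add_iff_right ENat.one_ne_top).1 hB
  exact Set.encard_le_one_iff.1 hdiff y z ⟨hy, hyx⟩ ⟨hz, hzx⟩

namespace Chart

variable {X : Type u}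

theorem mem_rel_mul {f g : Chart X} {x y z : X} (hf : (x, y) ∈ f.rel) (hg : (y, z) ∈ g.rel) :
    (x, z) ∈ (f * g).rel :=
  ⟨y, hf, hg⟩

theorem rel_injective : Function.Injective (rel : Chart X → Set (X × X)) := by
  rintro ⟨r, _, _⟩ ⟨r', _, _⟩ rfl
  rfl

theorem eq_of_rel_subset_rel {f g : Chart X} (hf : f.dom = Set.univ) (hfg : f.rel ⊆ g.rel) :
    f = g := by
  refine rel_injective (hfg.antisymm ?_)
  rintro ⟨x, y⟩ hg
  obtain ⟨z, hz⟩ : x ∈ f.dom := hf ▸ mem_univ x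
  rwa [g.functional hg (hfg hz)]

/-- An injective map `X → X`, regarded as a chart with full domain. -/
def ofInjective {a : X → X} (ha : Function.Injective a) : Chart X where
  rel := {p | p.2 = a p.1}
  functional _ _ _ hy hz := Eq.trans hy (Eq.symm hz)
  injective _ _ _ hx hz := ha (Eq.trans (Eq.symm hx) hz)

/-- The chart fixing every `a x` and sending `b x` to `b y` whenever `σ` sends `x` to `y`: it acts
as the identity on a copy of `X` and as `σ` on another, disjoint copy. -/
def idSum {a b : X → X} (hb : Function.Injective b) (hab : ∀ x y, a x ≠ b y) (σ : Chart X) :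
    Chart X where
  rel := range (fun x => (a x, a x)) ∪ Prod.map b b '' σ.rel
  functional := by
    rintro _ _ _ (⟨x, ⟨⟩⟩ | ⟨⟨x, y⟩, hxy, ⟨⟩⟩) (⟨x', h⟩ | ⟨⟨x', y'⟩, hxy', h⟩) <;>
      obtain ⟨hfst, rfl⟩ := Prod.mk.inj h
    · exact hfst.symm
    · exact absurd hfst.symm (hab _ _)
    · exact absurd hfst (hab _ _)
    · obtain rfl : x' = x := hb hfst
      exact congrArg b (σ.functional hxy hxy')
  injective := by
    rintro _ _ _ (⟨y, ⟨⟩⟩ | ⟨⟨x, y⟩, hxy, ⟨⟩⟩) (⟨y', h⟩ | ⟨⟨x', y'⟩, hxy', h⟩) <;>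
      obtain ⟨rfl, hsnd⟩ := Prod.mk.inj h
    · exact hsnd.symm
    · exact absurd hsnd.symm (hab _ _)
    · exact absurd hsnd (hab _ _)
    · obtain rfl : y' = y := hb hsnd
      exact congrArg b (σ.injective hxy hxy')

/-- The chart exchanging the two points of each two-element part of `P`, and undefined on the parts
with a single point. -/
def partner {P : Set (Set X)} (hP : Setoid.IsPartition P) (hP2 : ∀ B ∈ P, B.encard ≤ 2) :
    Chart X where
  rel := {p | p.1 ≠ p.2 ∧ ∃ B ∈ P, p.1 ∈ B ∧ p.2 ∈ B}
  functional := by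
    rintro x y y' ⟨hxy, B, hB, hxB, hyB⟩ ⟨hxy', B', hB', hxB', hyB'⟩
    obtain rfl : B = B' := (hP.2 x).unique ⟨hB, hxB⟩ ⟨hB', hxB'⟩
    exact eq_of_encard_le_two (hP2 B hB) hxB hyB hyB' hxy.symm hxy'.symm
  injective := by
    rintro x x' y ⟨hxy, B, hB, hxB, hyB⟩ ⟨hxy', B', hB', hxB', hyB'⟩
    obtain rfl : B = B' := (hP.2 y).unique ⟨hB, hyB⟩ ⟨hB', hyB'⟩
    exact eq_of_encard_le_two (hP2 B hB) hyB hxB hxB' hxy hxy'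

theorem dom_eq_univ_of_mem_pstab {P : Set (Set X)} {f : Chart X} (hf : f ∈ PStab P) :
    f.dom = Set.univ :=
  eq_univ_of_forall hf.1.1

theorem rel_subset_of_mem_pstab {P : Set (Set X)} (hP : Setoid.IsPartition P)
    (hP2 : ∀ B ∈ P, B.encard ≤ 2) {f : Chart X} (hf : f ∈ PStab P) :
    f.rel ⊆ diagonal X ∪ (partner hP hP2).rel := by
  rintro ⟨x, y⟩ hxy
  obtain ⟨B, ⟨hB, hxB⟩, -⟩ := hP.2 x
  have hyB : y ∈ B := hf.2 B hB ▸ ⟨x, hxB, hxy⟩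
  exact or_iff_not_imp_left.2 fun hne => ⟨hne, B, hB, hxB, hyB⟩

open Classical in
/-- The mixture of `a` and `b` that takes the value `a x` at the fixed points `x` of `f` and `b x`
elsewhere. -/
noncomputable def mixture (f : Chart X) (a b : X → X) (x : X) : X :=
  if (x, x) ∈ f.rel then a x else b x

theorem mixture_eq_or_eq (f : Chart X) (a b : X → X) (x : X) :
    f.mixture a b x = a x ∨ f.mixture a b x = b x := by
  unfold mixture
  split_ifs
  · exact Or.inl rfl
  · exact Or.inr rfl

theorem mixture_mem_rel_idSum {a b : X → X} (hb : Function.Injective b)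
    (hab : ∀ x y, a x ≠ b y) {f σ : Chart X} (hfσ : f.rel ⊆ diagonal X ∪ σ.rel) {x y : X}
    (hxy : (x, y) ∈ f.rel) :
    (f.mixture a b x, f.mixture a b y) ∈ (idSum hb hab σ).rel := by
  by_cases hne : x = y
  · subst hne
    rw [mixture, if_pos hxy]
    exact Or.inl ⟨x, rfl⟩
  · have hx : (x, x) ∉ f.rel := fun hxx => hne (f.functional hxx hxy)
    have hy : (y, y) ∉ f.rel := fun hyy => hne (f.injective hxy hyy)
    rw [mixture, mixture, if_neg hx, if_neg hy]
    exact Or.inr ⟨(x, y), (hfσ hxy).resolve_left hne, rfl⟩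

end Chart

/-- Every sequence `γ` with `γ i ∈ {α i, β i}` for all `i` is reached from `α`, and taken back
to `α`, by elements of `S`. -/
def RealizesMixtures {X ι : Type*} (S : Set (Chart X)) (α β : ι → X) : Prop :=
  ∀ γ : ι → X, (∀ i, γ i = α i ∨ γ i = β i) →
    ∃ g ∈ S, ∃ g' ∈ S, ∀ i, (α i, γ i) ∈ g.rel ∧ (γ i, α i) ∈ g'.rel

theorem RealizesMixtures.comp {X ι κ : Type*} {S : Set (Chart X)} {α β : ι → X}
    (h : RealizesMixtures S α β) {e : κ → ι} (he : Function.Injective e) :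
    RealizesMixtures S (α ∘ e) (β ∘ e) := by
  intro γ hγ
  have hext : ∀ i, Function.extend e γ α i = α i ∨ Function.extend e γ α i = β i := by
    intro i
    by_cases hi : ∃ k, e k = i
    · obtain ⟨k, rfl⟩ := hi
      simpa only [he.extend_apply, Function.comp_apply] using hγ k
    · exact Or.inl (Function.extend_apply' _ _ _ hi)
  obtain ⟨g, hg, g', hg', hgg'⟩ := h _ hext
  refine ⟨g, hg, g', hg', fun k => ?_⟩
  simpa only [he.extend_apply, Function.comp_apply] using hgg' (e k)

theorem RealizesMixtures.exists_eq_mul {X : Type*} {S : Set (Chart X)} {a b : X → X}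
    (h : RealizesMixtures S a b) (ha : Function.Injective a) (hb : Function.Injective b)
    (hab : ∀ x y, a x ≠ b y) {f σ : Chart X} (hf : f.dom = Set.univ)
    (hfσ : f.rel ⊆ diagonal X ∪ σ.rel) :
    ∃ g ∈ S, ∃ g' ∈ S, f = Chart.ofInjective ha * g * Chart.idSum hb hab σ * g' *
      (Chart.ofInjective ha)⁻¹ := by
  obtain ⟨g, hg, g', hg', hgg'⟩ := h (f.mixture a b) (f.mixture_eq_or_eq a b)
  refine ⟨g, hg, g', hg', Chart.eq_of_rel_subset_rel hf ?_⟩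
  rintro ⟨x, y⟩ hxy
  have hu (z : X) : (z, a z) ∈ (Chart.ofInjective ha).rel := rfl
  have hv := Chart.mixture_mem_rel_idSum hb hab hfσ hxy
  have hxγ := Chart.mem_rel_mul (hu x) (hgg' x).1
  have hγγ := Chart.mem_rel_mul hxγ hv
  have hγy := Chart.mem_rel_mul hγγ (hgg' y).2
  exact Chart.mem_rel_mul hγy (hu y)

theorem RealizesMixtures.bsleq {X : Type*} {S : Set (Chart X)} {a b : X → X}
    (h : RealizesMixtures S a b) (ha : Function.Injective a) (hb : Function.Injective b)
    (hab : ∀ x y, a x ≠ b y) (σ : Chart X) :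
    BSleq {f | f.dom = Set.univ ∧ f.rel ⊆ diagonal X ∪ σ.rel} S := by
  let u := Chart.ofInjective ha
  let v := Chart.idSum hb hab σ
  refine ⟨{u, v, u⁻¹}, Set.to_countable _, ?_⟩
  rintro f ⟨hf, hfσ⟩
  obtain ⟨g, hg, g', hg', rfl⟩ := h.exists_eq_mul ha hb hab hf hfσ
  have hu : InGen (S ∪ {u, v, u⁻¹}) u := .base (.inr (.inl rfl))
  have hv : InGen (S ∪ {u, v, u⁻¹}) v := .base (.inr (.inr (.inl rfl)))
  have hu' : InGen (S ∪ {u, v, u⁻¹}) u⁻¹ := .base (.inr (.inr (.inr rfl)))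
  exact (((hu.mul (.base (.inl hg))).mul hv).mul (.base (.inl hg'))).mul hu'

theorem BSleq.mono_left {X : Type*} {S S' T : Set (Chart X)} (hS : S ⊆ S') (h : BSleq S' T) :
    BSleq S T := by
  obtain ⟨U, hU, hS'⟩ := h
  exact ⟨U, hU, hS.trans hS'⟩

theorem stmt9_general {X ι : Type*} (e : X ↪ ι) {S : Set (Chart X)} {P : Set (Set X)}
    (hP : Setoid.IsPartition P) (hP2 : ∀ B ∈ P, B.encard ≤ 2) {α β : ι → X}
    (hα : Function.Injective α) (hβ : Function.Injective β) (hαβ : ∀ i j, α i ≠ β j)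
    (h : RealizesMixtures S α β) :
    BSleq (PStab P) S := by
  have hσ : BSleq {f | f.dom = Set.univ ∧ f.rel ⊆ diagonal X ∪ (Chart.partner hP hP2).rel} S :=
    (h.comp e.injective).bsleq (hα.comp e.injective) (hβ.comp e.injective)
      (fun x y => hαβ (e x) (e y)) (Chart.partner hP hP2)
  refine hσ.mono_left fun f hf => ?_
  exact ⟨Chart.dom_eq_univ_of_mem_pstab hf, Chart.rel_subset_of_mem_pstab hP hP2 hf⟩

/-- analogue of Bergman–Shelah Lemma 14: if there are two disjoint
sequences of distinct elements `α, β` such that every mixed sequence `γ` (with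
`γ i ∈ {α i, β i}`) is realised by elements of `S` in both directions, then
`PStab 𝒫₂ ≼ S` for the 2-uniform partition `𝒫₂`. -/
theorem stmt9 {X : Type u} [Countable X] [Infinite X] (S : Set (Chart X))
    (hS : IsSubsemigroup S)
    (P2 : Set (Set X)) (hpart : Setoid.IsPartition P2)
    (h2 : ∀ B ∈ P2, ∃ a b : X, a ≠ b ∧ B = {a, b})
    (α β : ℕ → X) (hα : Function.Injective α) (hβ : Function.Injective β)
    (hdisj : ∀ i j : ℕ, α i ≠ β j)
    (h : ∀ γ : ℕ → X, (∀ i, γ i = α i ∨ γ i = β i) →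
      ∃ g ∈ S, ∃ g' ∈ S, ∀ i : ℕ, (α i, γ i) ∈ g.rel ∧ (γ i, α i) ∈ g'.rel) :
    BSleq (PStab P2) S := by
  obtain ⟨e⟩ := nonempty_embedding_nat X
  have hcard : ∀ B ∈ P2, B.encard ≤ 2 := fun B hB => by
    obtain ⟨a, b, hab, rfl⟩ := h2 B hB
    exact (Set.encard_pair hab).le
  exact stmt9_general e hpart hcard hα hβ hdisj h
end
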